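/- There exists a universal constant C with the following property. Fix s ∈ ℝ, λ ≥ 1 and C₀ > 0. Let K : ℝ² → ℝ be a continuously differentiable kernel satisfying ∫_{ℝ²} |x|^a |∇^b K(x)| dx ≤ C₀ λ^{b−a+s} for all integers a, b ∈ {0,1}, and define T_K to act on functions of space by T_K h(x) = ∫_{ℝ²} K(y) h(x−y) dy. Let u : ℝ² × ℝ → ℝ² be a smooth vector field, 2π-periodic in space, with div u(·,t) = 0 for all t, let D_t = ∂_t + u·∇ denote the material derivative, and let f : ℝ² × ℝ → ℝ be smooth and 2π-periodic in space. Then for every time t: sup_{x∈ℝ²} | D_t (T_K f)(x,t) − T_K (D_t f)(x,t) | ≤ C C₀ λ^s ‖∇u(·,t)‖_{C⁰} ‖f(·,t)‖_{C⁰}. -/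

import Mathlib

/-!
Differentiating under the integral sign, `[D_t, T_K] f (x, t)` is the integral of
`K y • ∇f (x - y, t) (w y)` with `w y = u (x, t) - u (x - y, t)`: the time derivatives cancel and
only the increment of the velocity survives. Since `w` is divergence free, integrating by parts
moves the gradient from `f` onto `K`, and `‖w y‖ ≤ ‖∇u‖ ‖y‖` turns the factor `∇K y` into
`‖y‖ ‖∇K y‖`, whose integral is the moment `a = b = 1` of the kernel.
-/

noncomputable section

open Real MeasureTheory
open scoped BigOperators

abbrev E2 : Type := EuclideanSpace ℝ (Fin 2)

open Filter Set Topology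
open ContinuousLinearMap (lsmul)
open scoped Convolution

section Calculus

variable {E F G : Type*} [NormedAddCommGroup E] [NormedSpace ℝ E] [NormedAddCommGroup F]
  [NormedSpace ℝ F] [NormedAddCommGroup G] [NormedSpace ℝ G]

lemma fderiv_continuousLinearMap_comp (c : F →L[ℝ] G) {f : E → F} {x : E}
    (hf : DifferentiableAt ℝ f x) :
    fderiv ℝ (fun y => c (f y)) x = c.comp (fderiv ℝ f x) :=
  (c.hasFDerivAt.comp x hf.hasFDerivAt).fderiv

lemma fderiv_comp_const_sub (g : E → F) (c x : E) :
    fderiv ℝ (fun y => g (c - y)) x = -fderiv ℝ g (c - x) := by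
  have hneg := (ContinuousLinearEquiv.neg ℝ (M := E)).comp_right_fderiv
    (f := fun y => g (c + y)) (x := x)
  simp only [ContinuousLinearEquiv.coe_neg, Function.comp_def, Pi.neg_apply, id_eq,
    fderiv_comp_add_left, ← sub_eq_add_neg] at hneg
  rw [hneg]
  ext
  simp

lemma fderiv_slice_left {f : E × F → G} {x : E} {t : F} (hf : DifferentiableAt ℝ f (x, t)) :
    fderiv ℝ (fun z => f (z, t)) x = (fderiv ℝ f (x, t)).comp (.inl ℝ E F) :=
  (hf.hasFDerivAt.comp x (hasFDerivAt_prodMk_left x t)).fderiv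

lemma norm_fderiv_slice_left_le {f : E × F → G} {x : E} {t : F}
    (hf : DifferentiableAt ℝ f (x, t)) :
    ‖fderiv ℝ (fun z => f (z, t)) x‖ ≤ ‖fderiv ℝ f (x, t)‖ := by
  rw [fderiv_slice_left hf]
  exact (ContinuousLinearMap.opNorm_comp_le _ _).trans
    (mul_le_of_le_one_right (norm_nonneg _) (ContinuousLinearMap.norm_inl_le_one ℝ E F))

lemma norm_le_mul_norm_of_norm_fderiv_le {w : E → F} {B : ℝ} (hw : Differentiable ℝ w)
    (hw0 : w 0 = 0) (hB : ∀ y, ‖fderiv ℝ w y‖ ≤ B) (y : E) : ‖w y‖ ≤ B * ‖y‖ := by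
  simpa [hw0] using convex_univ.norm_image_sub_le_of_norm_fderiv_le
    (fun z _ => hw z) (fun z _ => hB z) (mem_univ 0) (mem_univ y)

end Calculus

section Divergence

variable {E : Type*} [NormedAddCommGroup E] [NormedSpace ℝ E] {v : E → E} {x : E}

/-- The divergence of a vector field, encoded as the trace of its derivative, so that no basis of
the space has to be chosen. -/
def divergence (v : E → E) (x : E) : ℝ :=
  LinearMap.trace ℝ E (fderiv ℝ v x : E →ₗ[ℝ] E)

lemma divergence_eq_sum_basis {ι : Type*} [Fintype ι] (b : Module.Basis ι ℝ E) (v : E → E)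
    (x : E) : divergence v x = ∑ i, b.coord i (fderiv ℝ v x (b i)) := by
  classical
  simp [divergence, LinearMap.trace_eq_matrix_trace ℝ b, Matrix.trace, LinearMap.toMatrix_apply]

lemma divergence_euclideanSpace {ι : Type*} [Fintype ι] [DecidableEq ι]
    {v : EuclideanSpace ℝ ι → EuclideanSpace ℝ ι} {x : EuclideanSpace ℝ ι}
    (hv : DifferentiableAt ℝ v x) :
    divergence v x = ∑ j, fderiv ℝ (fun y => v y j) x (EuclideanSpace.single j 1) := by
  have hcoord (j : ι) := fderiv_continuousLinearMap_comp (EuclideanSpace.proj j) hv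
  simp only [PiLp.proj_apply] at hcoord
  simp [divergence_eq_sum_basis (EuclideanSpace.basisFun ι ℝ).toBasis, hcoord]

lemma divergence_const_sub_comp_const_sub (v : E → E) (a c x : E) :
    divergence (fun y => a - v (c - y)) x = divergence v (c - x) := by
  simp only [divergence, fderiv_const_sub, fderiv_comp_const_sub, neg_neg]

lemma divergence_smul [FiniteDimensional ℝ E] {k : E → ℝ} (hk : DifferentiableAt ℝ k x)
    (hv : DifferentiableAt ℝ v x) :
    divergence (fun y => k y • v y) x = fderiv ℝ k x (v x) + k x * divergence v x := by
  simp [divergence, fderiv_fun_smul hk hv, add_comm]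

end Divergence

section IntegrationByParts

variable {E F : Type*} [NormedAddCommGroup E] [NormedSpace ℝ E] [MeasurableSpace E]
  [NormedAddCommGroup F] [NormedSpace ℝ F]

lemma integrable_clm_smul_clm {X Y : Type*} [NormedAddCommGroup X] [NormedSpace ℝ X]
    [NormedAddCommGroup Y] [NormedSpace ℝ Y] {α : Type*} [MeasurableSpace α] {μ : Measure α}
    {φ : α → X} {ψ : α → Y} (p : X →L[ℝ] ℝ) (q : Y →L[ℝ] F) (hφ : AEStronglyMeasurable φ μ)
    (hψ : AEStronglyMeasurable ψ μ) (hφψ : Integrable (fun a => ‖φ a‖ * ‖ψ a‖) μ) :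
    Integrable (fun a => p (φ a) • q (ψ a)) μ := by
  refine (hφψ.const_mul (‖p‖ * ‖q‖)).mono' ((p.continuous.comp_aestronglyMeasurable hφ).smul
    (q.continuous.comp_aestronglyMeasurable hψ)) (.of_forall fun a => ?_)
  rw [norm_smul]
  calc ‖p (φ a)‖ * ‖q (ψ a)‖ ≤ ‖p‖ * ‖φ a‖ * (‖q‖ * ‖ψ a‖) := by
        gcongr <;> exact ContinuousLinearMap.le_opNorm _ _
    _ = ‖p‖ * ‖q‖ * (‖φ a‖ * ‖ψ a‖) := by ring

variable [FiniteDimensional ℝ E] [BorelSpace E] {μ : Measure E}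

lemma integral_clm_smul_fderiv_eq_neg [μ.IsAddHaarMeasure] {V : E → E} {G : E → F}
    (hV : ContDiff ℝ 1 V) (hG : ContDiff ℝ 1 G)
    (hV'G : Integrable (fun y => ‖fderiv ℝ V y‖ * ‖G y‖) μ)
    (hVG' : Integrable (fun y => ‖V y‖ * ‖fderiv ℝ G y‖) μ)
    (hVG : Integrable (fun y => ‖V y‖ * ‖G y‖) μ) (c : E →L[ℝ] ℝ) (e : E) :
    ∫ y, c (V y) • fderiv ℝ G y e ∂μ = -∫ y, c (fderiv ℝ V y e) • G y ∂μ := by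
  have hVm := hV.continuous.aestronglyMeasurable (μ := μ)
  have hGm := hG.continuous.aestronglyMeasurable (μ := μ)
  have hV'm := (hV.continuous_fderiv one_ne_zero).aestronglyMeasurable (μ := μ)
  have hG'm := (hG.continuous_fderiv one_ne_zero).aestronglyMeasurable (μ := μ)
  have hcV' (y) : fderiv ℝ (fun y => c (V y)) y e = c (fderiv ℝ V y e) := by
    rw [fderiv_continuousLinearMap_comp c (hV.differentiable one_ne_zero y),
      ContinuousLinearMap.comp_apply]
  simp only [← hcV']
  refine integral_smul_fderiv_eq_neg_fderiv_smul_of_integrable ?_ ?_ ?_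
    (fun y _ => c.differentiableAt.comp y (hV.differentiable one_ne_zero y))
    (fun y _ => hG.differentiable one_ne_zero y)
  · simp only [hcV']
    exact integrable_clm_smul_clm (c.comp (.apply ℝ E e)) (.id ℝ F) hV'm hGm hV'G
  · exact integrable_clm_smul_clm c (.apply ℝ F e) hVm hG'm hVG'
  · exact integrable_clm_smul_clm c (.id ℝ F) hVm hGm hVG

lemma integral_fderiv_apply_eq_neg_integral_divergence_smul [μ.IsAddHaarMeasure] {V : E → E}
    {G : E → F} (hV : ContDiff ℝ 1 V) (hG : ContDiff ℝ 1 G)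
    (hV'G : Integrable (fun y => ‖fderiv ℝ V y‖ * ‖G y‖) μ)
    (hVG' : Integrable (fun y => ‖V y‖ * ‖fderiv ℝ G y‖) μ)
    (hVG : Integrable (fun y => ‖V y‖ * ‖G y‖) μ) :
    ∫ y, fderiv ℝ G y (V y) ∂μ = -∫ y, divergence V y • G y ∂μ := by
  let b := Module.finBasis ℝ E
  let c (i) : E →L[ℝ] ℝ := (b.coord i).toContinuousLinearMap
  have hG'V (y) : fderiv ℝ G y (V y) = ∑ i, c i (V y) • fderiv ℝ G y (b i) := by
    conv_lhs => rw [← b.sum_repr (V y), map_sum]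
    simp [c]
  have hdiv (y) : divergence V y • G y = ∑ i, c i (fderiv ℝ V y (b i)) • G y := by
    simp [divergence_eq_sum_basis b, Finset.sum_smul, c]
  have hint_left (i) : Integrable (fun y => c i (V y) • fderiv ℝ G y (b i)) μ :=
    integrable_clm_smul_clm (c i) (.apply ℝ F (b i)) hV.continuous.aestronglyMeasurable
      (hG.continuous_fderiv one_ne_zero).aestronglyMeasurable hVG'
  have hint_right (i) : Integrable (fun y => c i (fderiv ℝ V y (b i)) • G y) μ :=
    integrable_clm_smul_clm ((c i).comp (.apply ℝ E (b i))) (.id ℝ F)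
      (hV.continuous_fderiv one_ne_zero).aestronglyMeasurable
      hG.continuous.aestronglyMeasurable hV'G
  simp only [hG'V, hdiv]
  rw [integral_finsetSum _ fun i _ => hint_left i, integral_finsetSum _ fun i _ => hint_right i,
    ← Finset.sum_neg_distrib]
  exact Finset.sum_congr rfl fun i _ =>
    integral_clm_smul_fderiv_eq_neg hV hG hV'G hVG' hVG (c i) (b i)

end IntegrationByParts

section KernelEstimate

variable {E F : Type*} [NormedAddCommGroup E] [NormedSpace ℝ E] [FiniteDimensional ℝ E]
  [MeasurableSpace E] [BorelSpace E] {μ : Measure E} [NormedAddCommGroup F] [NormedSpace ℝ F]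
  {K : E → ℝ} {w : E → F} {B : ℝ}

lemma integrable_smul_of_norm_le_mul_norm (hK : Continuous K)
    (hxK : Integrable (fun x => ‖x‖ * ‖K x‖) μ) (hw : Continuous w)
    (hwB : ∀ y, ‖w y‖ ≤ B * ‖y‖) : Integrable (fun y => K y • w y) μ := by
  refine (hxK.const_mul B).mono' (hK.smul hw).aestronglyMeasurable (.of_forall fun y => ?_)
  rw [norm_smul]
  calc ‖K y‖ * ‖w y‖ ≤ ‖K y‖ * (B * ‖y‖) := by gcongr; exact hwB y
    _ = B * (‖y‖ * ‖K y‖) := by ring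

lemma integrable_fderiv_smul_of_norm_fderiv_le (hK : ContDiff ℝ 1 K) (hKi : Integrable K μ)
    (hxDK : Integrable (fun x => ‖x‖ * ‖fderiv ℝ K x‖) μ) (hw : ContDiff ℝ 1 w)
    (hwB : ∀ y, ‖w y‖ ≤ B * ‖y‖) (hB : ∀ y, ‖fderiv ℝ w y‖ ≤ B) :
    Integrable (fderiv ℝ fun y => K y • w y) μ := by
  refine ((hKi.norm.const_mul B).add (hxDK.const_mul B)).mono'
    ((hK.smul hw).continuous_fderiv one_ne_zero).aestronglyMeasurable (.of_forall fun y => ?_)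
  rw [fderiv_fun_smul (hK.differentiable one_ne_zero y) (hw.differentiable one_ne_zero y)]
  calc ‖K y • fderiv ℝ w y + (fderiv ℝ K y).smulRight (w y)‖
      ≤ ‖K y‖ * ‖fderiv ℝ w y‖ + ‖fderiv ℝ K y‖ * ‖w y‖ := by
        rw [← norm_smul, ← ContinuousLinearMap.norm_smulRight_apply]
        exact norm_add_le _ _
    _ ≤ ‖K y‖ * B + ‖fderiv ℝ K y‖ * (B * ‖y‖) := by gcongr <;> apply_assumption
    _ = B * ‖K y‖ + B * (‖y‖ * ‖fderiv ℝ K y‖) := by ring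

variable {v : E → E} {G : E → F} {A A' : ℝ}

lemma integral_smul_fderiv_apply_eq_neg_integral_fderiv_smul [μ.IsAddHaarMeasure]
    (hK : ContDiff ℝ 1 K) (hKi : Integrable K μ) (hxK : Integrable (fun x => ‖x‖ * ‖K x‖) μ)
    (hxDK : Integrable (fun x => ‖x‖ * ‖fderiv ℝ K x‖) μ) (hv : ContDiff ℝ 1 v)
    (hvB : ∀ y, ‖v y‖ ≤ B * ‖y‖) (hB : ∀ y, ‖fderiv ℝ v y‖ ≤ B)
    (hdiv : ∀ y, divergence v y = 0) (hG : ContDiff ℝ 1 G) (hA : ∀ y, ‖G y‖ ≤ A)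
    (hA' : ∀ y, ‖fderiv ℝ G y‖ ≤ A') :
    ∫ y, K y • fderiv ℝ G y (v y) ∂μ = -∫ y, fderiv ℝ K y (v y) • G y ∂μ := by
  have hKv := (integrable_smul_of_norm_le_mul_norm hK.continuous hxK hv.continuous hvB).norm
  have hKv' := (integrable_fderiv_smul_of_norm_fderiv_le hK hKi hxDK hv hvB hB).norm
  have hGm := hG.continuous.norm.aestronglyMeasurable (μ := μ)
  have hG'm := (hG.continuous_fderiv one_ne_zero).norm.aestronglyMeasurable (μ := μ)
  have hdivKv (y) : divergence (fun y => K y • v y) y = fderiv ℝ K y (v y) := by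
    rw [divergence_smul (hK.differentiable one_ne_zero y) (hv.differentiable one_ne_zero y),
      hdiv, mul_zero, add_zero]
  have hparts := integral_fderiv_apply_eq_neg_integral_divergence_smul
    (V := fun y => K y • v y) (hK.smul hv) hG
    (hKv'.mul_bdd hGm (.of_forall fun y => (norm_norm _).trans_le (hA y)))
    (hKv.mul_bdd hG'm (.of_forall fun y => (norm_norm _).trans_le (hA' y)))
    (hKv.mul_bdd hGm (.of_forall fun y => (norm_norm _).trans_le (hA y)))
  simpa only [map_smul, hdivKv] using hparts

lemma norm_integral_smul_fderiv_apply_le [μ.IsAddHaarMeasure]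
    (hK : ContDiff ℝ 1 K) (hKi : Integrable K μ) (hxK : Integrable (fun x => ‖x‖ * ‖K x‖) μ)
    (hxDK : Integrable (fun x => ‖x‖ * ‖fderiv ℝ K x‖) μ) (hv : ContDiff ℝ 1 v)
    (hvB : ∀ y, ‖v y‖ ≤ B * ‖y‖) (hB : ∀ y, ‖fderiv ℝ v y‖ ≤ B)
    (hdiv : ∀ y, divergence v y = 0) (hG : ContDiff ℝ 1 G) (hA : ∀ y, ‖G y‖ ≤ A)
    (hA' : ∀ y, ‖fderiv ℝ G y‖ ≤ A') :
    ‖∫ y, K y • fderiv ℝ G y (v y) ∂μ‖ ≤ (∫ y, ‖y‖ * ‖fderiv ℝ K y‖ ∂μ) * B * A := by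
  rw [integral_smul_fderiv_apply_eq_neg_integral_fderiv_smul hK hKi hxK hxDK hv hvB hB hdiv hG hA
    hA', norm_neg, mul_assoc, ← integral_mul_const]
  refine norm_integral_le_of_norm_le (hxDK.mul_const _) (.of_forall fun y => ?_)
  rw [norm_smul]
  calc ‖fderiv ℝ K y (v y)‖ * ‖G y‖ ≤ ‖fderiv ℝ K y‖ * (B * ‖y‖) * A := by
        gcongr
        · exact (norm_nonneg _).trans ((fderiv ℝ K y).le_opNorm_of_le (hvB y))
        · exact (fderiv ℝ K y).le_opNorm_of_le (hvB y)
        · exact hA y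
    _ = ‖y‖ * ‖fderiv ℝ K y‖ * (B * A) := by ring

end KernelEstimate

section MaterialDerivative

lemma integrable_smul_comp_const_sub {G F : Type*} [TopologicalSpace G] [AddGroup G]
    [ContinuousSub G] [SecondCountableTopology G] [MeasurableSpace G] [OpensMeasurableSpace G]
    {μ : Measure G} [NormedAddCommGroup F] [NormedSpace ℝ F] {K : G → ℝ} {g : G → F} {A : ℝ}
    (hK : Integrable K μ) (hg : Continuous g) (hA : ∀ z, ‖g z‖ ≤ A) (x : G) :
    Integrable (fun y => K y • g (x - y)) μ :=
  hK.smul_bdd A (hg.comp (continuous_const.sub continuous_id)).aestronglyMeasurable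
    (.of_forall fun _ => hA _)

variable {E F : Type*} [NormedAddCommGroup E] [NormedSpace ℝ E] [NormedAddCommGroup F]
  [NormedSpace ℝ F] {u : E × ℝ → E} {f : E × ℝ → F} {x : E} {t : ℝ}

/-- The material derivative `D_t f = ∂ₜ f + (u · ∇) f` along the time-dependent velocity field `u`,
as a function on space-time; `(u · ∇) f` is the spatial derivative of `f` applied to `u`. -/
def materialDeriv (u : E × ℝ → E) (f : E × ℝ → F) (p : E × ℝ) : F :=
  deriv (fun τ => f (p.1, τ)) p.2 + fderiv ℝ (fun z => f (z, p.2)) p.1 (u p)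

lemma materialDeriv_eq_fderiv_apply (hf : DifferentiableAt ℝ f (x, t)) :
    materialDeriv u f (x, t) = fderiv ℝ f (x, t) (u (x, t), 1) := by
  have htime : deriv (fun τ => f (x, τ)) t = fderiv ℝ f (x, t) (0, 1) :=
    (hf.hasFDerivAt.comp_hasDerivAt t
      ((hasDerivAt_const t x).prodMk (hasDerivAt_id t))).deriv
  simp [materialDeriv, htime, fderiv_slice_left hf, ← map_add]

/-- The operator `T_K` on functions on space-time: convolution with the kernel `K` in the space
variable, at each fixed time. -/
def spatialConvolution [MeasurableSpace E] {T : Type*} (μ : Measure E) (K : E → ℝ)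
    (f : E × T → F) (p : E × T) : F :=
  (K ⋆[lsmul ℝ ℝ, μ] fun z => f (z, p.2)) p.1

variable [SecondCountableTopology E] [MeasurableSpace E] [OpensMeasurableSpace E] {μ : Measure E}
  {K : E → ℝ} {A A' : ℝ}

lemma hasFDerivAt_spatialConvolution {T : Type*} [NormedAddCommGroup T] [NormedSpace ℝ T]
    {f : E × T → F} {t : T} (hK : Integrable K μ) (hf : ContDiff ℝ 1 f)
    (hA : ∀ z, ‖f (z, t)‖ ≤ A) (hA' : ∀ᶠ τ in 𝓝 t, ∀ z, ‖fderiv ℝ f (z, τ)‖ ≤ A') (x : E) :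
    HasFDerivAt (spatialConvolution μ K f) (∫ y, K y • fderiv ℝ f (x - y, t) ∂μ) (x, t) := by
  have hshift (p : E × T) (y : E) :
      HasFDerivAt (fun p : E × T => f (p.1 - y, p.2)) (fderiv ℝ f (p.1 - y, p.2)) p := by
    have hpair (q : E × T) : q - (y, 0) = (q.1 - y, q.2) := by ext <;> simp
    simpa only [hpair] using (hasFDerivAt_comp_sub ((y, 0) : E × T)).2
      (hf.differentiable one_ne_zero (p - (y, 0))).hasFDerivAt
  have hslice : Continuous fun z : E => (z, t) := by fun_prop
  have hKf : Integrable (fun y => K y • f (x - y, t)) μ :=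
    integrable_smul_comp_const_sub hK (hf.continuous.comp hslice) hA x
  have hKf' : Integrable (fun y => K y • fderiv ℝ f (x - y, t)) μ :=
    integrable_smul_comp_const_sub hK ((hf.continuous_fderiv one_ne_zero).comp hslice)
      hA'.self_of_nhds x
  refine hasFDerivAt_integral_of_dominated_of_fderiv_le
    (F := fun p y => K y • f (p.1 - y, p.2)) (F' := fun p y => K y • fderiv ℝ f (p.1 - y, p.2))
    (bound := fun y => ‖K y‖ * A') ((continuous_snd.tendsto (x, t)).eventually hA')
    (.of_forall fun p => ?_) hKf hKf'.aestronglyMeasurable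
    (.of_forall fun y p hp => ?_) (hK.norm.mul_const A')
    (.of_forall fun y p _ => (hshift p y).const_smul (K y))
  · exact hK.aestronglyMeasurable.smul (hf.continuous.comp (by fun_prop)).aestronglyMeasurable
  · rw [norm_smul]
    gcongr
    exact hp _

lemma materialDeriv_spatialConvolution_sub (hK : Integrable K μ) (hf : ContDiff ℝ 1 f)
    (hA : ∀ z, ‖f (z, t)‖ ≤ A) (hA' : ∀ᶠ τ in 𝓝 t, ∀ z, ‖fderiv ℝ f (z, τ)‖ ≤ A')
    (hu : Integrable
      (fun y => K y • fderiv ℝ (fun z => f (z, t)) (x - y) (u (x, t) - u (x - y, t))) μ) :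
    materialDeriv u (spatialConvolution μ K f) (x, t)
        - spatialConvolution μ K (materialDeriv u f) (x, t)
      = ∫ y, K y • fderiv ℝ (fun z => f (z, t)) (x - y) (u (x, t) - u (x - y, t)) ∂μ := by
  have hfd := hf.differentiable one_ne_zero
  have hKf' : Integrable (fun y => K y • fderiv ℝ f (x - y, t)) μ :=
    integrable_smul_comp_const_sub hK
      ((hf.continuous_fderiv one_ne_zero).comp (by fun_prop : Continuous fun z : E => (z, t)))
      hA'.self_of_nhds x
  have hconv := hasFDerivAt_spatialConvolution hK hf hA hA' x
  rw [materialDeriv_eq_fderiv_apply hconv.differentiableAt, hconv.fderiv,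
    ContinuousLinearMap.integral_apply hKf', sub_eq_iff_eq_add', spatialConvolution,
    convolution_lsmul, ← sub_eq_iff_eq_add,
    ← integral_sub (hKf'.apply_continuousLinearMap (u (x, t), 1)) hu]
  congr with y
  rw [materialDeriv_eq_fderiv_apply (hfd _), fderiv_slice_left (hfd _)]
  simp [← smul_sub, ← map_sub]

end MaterialDerivative

section Periodic

lemma periodic_of_mem_span {E α : Type*} [AddCommGroup E] {g : E → α} {S : Set E}
    (hg : ∀ c ∈ S, Function.Periodic g c) {c : E} (hc : c ∈ Submodule.span ℤ S) :
    Function.Periodic g c := by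
  induction hc using Submodule.span_induction with
  | mem c hc => exact hg c hc
  | zero => exact fun x => by rw [add_zero]
  | add c d _ _ hc hd => exact hc.add_period hd
  | smul n c _ hc => exact hc.zsmul n

variable {E ι : Type*} [NormedAddCommGroup E] [NormedSpace ℝ E]

lemma apply_fract_of_periodic [Fintype ι] {α : Type*} {g : E → α} (b : Module.Basis ι ℝ E)
    (hg : ∀ i, Function.Periodic g (b i)) (x : E) : g (ZSpan.fract b x) = g x :=
  (periodic_of_mem_span (forall_mem_range.2 hg) (ZSpan.floor b x).2).sub_eq x

lemma periodic_fderiv {F : Type*} [NormedAddCommGroup F] [NormedSpace ℝ F] {g : E → F}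
    {c : E} (hg : Function.Periodic g c) : Function.Periodic (fderiv ℝ g) c := fun x => by
  rw [← fderiv_comp_add_right, funext hg]

variable [Finite ι] (b : Module.Basis ι ℝ E)

lemma exists_eventually_norm_le_of_periodic {F T : Type*} [SeminormedAddCommGroup F]
    [TopologicalSpace T] [WeaklyLocallyCompactSpace T] {φ : E × T → F} (hφ : Continuous φ)
    (hper : ∀ τ i, Function.Periodic (fun x => φ (x, τ)) (b i)) (t : T) :
    ∃ A, ∀ᶠ τ in 𝓝 t, ∀ x, ‖φ (x, τ)‖ ≤ A := by
  have := Fintype.ofFinite ι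
  have := b.finiteDimensional_of_finite
  obtain ⟨S, hS, hSt⟩ := exists_compact_mem_nhds t
  obtain ⟨A, hA⟩ := ((ZSpan.fundamentalDomain_isBounded b).isCompact_closure.prod
    hS).exists_bound_of_continuousOn hφ.continuousOn
  refine ⟨A, eventually_of_mem hSt fun τ hτ x => ?_⟩
  rw [← apply_fract_of_periodic b (hper τ) x]
  exact hA _ ⟨subset_closure (ZSpan.fract_mem_fundamentalDomain b x), hτ⟩

lemma exists_forall_norm_le_of_periodic {F : Type*} [SeminormedAddCommGroup F] {g : E → F}
    (hg : Continuous g) (hper : ∀ i, Function.Periodic g (b i)) : ∃ A, ∀ x, ‖g x‖ ≤ A :=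
  (exists_eventually_norm_le_of_periodic b (hg.comp continuous_fst) (fun _ => hper) ()).imp
    fun _ h => h.self_of_nhds

end Periodic

section Commutator

variable {E F : Type*} [NormedAddCommGroup E] [NormedSpace ℝ E] [FiniteDimensional ℝ E]
  [MeasurableSpace E] [BorelSpace E] (μ : Measure E) [μ.IsAddHaarMeasure]
  [NormedAddCommGroup F] [NormedSpace ℝ F] {K : E → ℝ} {u : E × ℝ → E} {f : E × ℝ → F} {t : ℝ}

lemma norm_materialDeriv_spatialConvolution_sub_le {A A' B : ℝ}
    (hK : ContDiff ℝ 1 K) (hKi : Integrable K μ) (hxK : Integrable (fun x => ‖x‖ * ‖K x‖) μ)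
    (hxDK : Integrable (fun x => ‖x‖ * ‖fderiv ℝ K x‖) μ)
    (hu : ContDiff ℝ 1 fun z => u (z, t)) (hB : ∀ x, ‖fderiv ℝ (fun z => u (z, t)) x‖ ≤ B)
    (hdiv : ∀ x, divergence (fun z => u (z, t)) x = 0)
    (hf : ContDiff ℝ 1 f) (hA : ∀ x, ‖f (x, t)‖ ≤ A)
    (hA' : ∀ᶠ τ in 𝓝 t, ∀ x, ‖fderiv ℝ f (x, τ)‖ ≤ A') (x : E) :
    ‖materialDeriv u (spatialConvolution μ K f) (x, t)
        - spatialConvolution μ K (materialDeriv u f) (x, t)‖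
      ≤ (∫ y, ‖y‖ * ‖fderiv ℝ K y‖ ∂μ) * B * A := by
  let w (y : E) : E := u (x, t) - u (x - y, t)
  let g (z : E) : F := f (z, t)
  have hsub : ContDiff ℝ 1 fun y : E => x - y := contDiff_const.sub contDiff_id
  have hw : ContDiff ℝ 1 w := contDiff_const.sub (hu.comp hsub)
  have hw'_eq (y) : fderiv ℝ w y = fderiv ℝ (fun z => u (z, t)) (x - y) := by
    rw [fderiv_const_sub, fderiv_comp_const_sub (fun z => u (z, t)), neg_neg]
  have hw' (y) : ‖fderiv ℝ w y‖ ≤ B := hw'_eq y ▸ hB (x - y)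
  have hwdiv (y) : divergence w y = 0 :=
    (divergence_const_sub_comp_const_sub _ _ x y).trans (hdiv _)
  have hwB := norm_le_mul_norm_of_norm_fderiv_le (hw.differentiable one_ne_zero) (by simp [w]) hw'
  have hg : ContDiff ℝ 1 g := hf.comp (contDiff_id.prodMk contDiff_const)
  have hg' (z) : ‖fderiv ℝ g z‖ ≤ A' :=
    (norm_fderiv_slice_left_le (hf.differentiable one_ne_zero _)).trans (hA'.self_of_nhds z)
  have hKw : Integrable (fun y => K y • fderiv ℝ g (x - y) (w y)) μ := by
    refine integrable_smul_of_norm_le_mul_norm hK.continuous hxK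
      (((hg.continuous_fderiv one_ne_zero).comp hsub.continuous).clm_apply hw.continuous)
      (B := A' * B) fun y => ?_
    rw [mul_assoc]
    exact (fderiv ℝ g (x - y)).le_of_opNorm_le_of_le (hg' _) (hwB y)
  have hbound := norm_integral_smul_fderiv_apply_le hK hKi hxK hxDK hw hwB hw' hwdiv
    (hg.comp hsub) (fun y => hA (x - y)) (A' := A')
    (fun y => by simpa only [Function.comp_def, fderiv_comp_const_sub, norm_neg] using hg' (x - y))
  rw [materialDeriv_spatialConvolution_sub hKi hf hA hA' hKw]
  simpa only [Function.comp_def, fderiv_comp_const_sub, neg_apply, smul_neg, integral_neg,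
    norm_neg] using hbound

theorem material_derivative_convolution_commutator_general [CompleteSpace F]
    {ι : Type*} [Finite ι] (b : Module.Basis ι ℝ E)
    (hK : ContDiff ℝ 1 K) (hKi : Integrable K μ) (hxK : Integrable (fun x => ‖x‖ * ‖K x‖) μ)
    (hxDK : Integrable (fun x => ‖x‖ * ‖fderiv ℝ K x‖) μ)
    (hu : ContDiff ℝ 1 fun z => u (z, t)) (hub : ∀ i, Function.Periodic (fun z => u (z, t)) (b i))
    (hdiv : ∀ x, divergence (fun z => u (z, t)) x = 0)
    (hf : ContDiff ℝ 1 f) (hfb : ∀ τ i, Function.Periodic (fun z => f (z, τ)) (b i)) (x : E) :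
    ‖materialDeriv u (spatialConvolution μ K f) (x, t)
        - spatialConvolution μ K (materialDeriv u f) (x, t)‖
      ≤ (∫ y, ‖y‖ * ‖fderiv ℝ K y‖ ∂μ) * (⨆ z, ‖fderiv ℝ (fun w => u (w, t)) z‖)
          * (⨆ z, ‖f (z, t)‖) := by
  have hfb_joint (i) : Function.Periodic f (b i, 0) := fun p => by
    simpa [Prod.add_def] using hfb p.2 i p.1
  have hfb' (τ i) : Function.Periodic (fun z => fderiv ℝ f (z, τ)) (b i) := fun z => by
    simpa using periodic_fderiv (hfb_joint i) (z, τ)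
  obtain ⟨A, hA⟩ := exists_forall_norm_le_of_periodic b
    (hf.continuous.comp (by fun_prop : Continuous fun z : E => (z, t))) (hfb t)
  obtain ⟨A', hA'⟩ := exists_eventually_norm_le_of_periodic b
    (hf.continuous_fderiv one_ne_zero) hfb' t
  obtain ⟨B, hB⟩ := exists_forall_norm_le_of_periodic b (hu.continuous_fderiv one_ne_zero)
    fun i => periodic_fderiv (hub i)
  exact norm_materialDeriv_spatialConvolution_sub_le μ hK hKi hxK hxDK hu
    (le_ciSup ⟨B, forall_mem_range.2 hB⟩) hdiv hf (le_ciSup ⟨A, forall_mem_range.2 hA⟩) hA' x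

end Commutator

/-- Commutator estimate between the material derivative `D_t = ∂ₜ + u·∇` and a spatial
convolution operator `T_K` of order `s` localized at length scale `λ⁻¹`:
`‖[D_t, T_K] f(·,t)‖_{C⁰} ≤ C C₀ λ^s ‖∇u(·,t)‖_{C⁰} ‖f(·,t)‖_{C⁰}` for divergence-free `u`. -/
theorem material_derivative_convolution_commutator :
    ∃ C : ℝ, ∀ (s lam C₀ : ℝ), 1 ≤ lam → 0 < C₀ →
      ∀ (K : E2 → ℝ) (u : E2 × ℝ → E2) (f : E2 × ℝ → ℝ),
      ContDiff ℝ 1 K →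
      Integrable K →
      Integrable (fun x => ‖x‖ * |K x|) →
      Integrable (fun x => ‖fderiv ℝ K x‖) →
      Integrable (fun x => ‖x‖ * ‖fderiv ℝ K x‖) →
      (∫ x, |K x|) ≤ C₀ * lam ^ s →
      (∫ x, ‖x‖ * |K x|) ≤ C₀ * lam ^ (s - 1) →
      (∫ x, ‖fderiv ℝ K x‖) ≤ C₀ * lam ^ (s + 1) →
      (∫ x, ‖x‖ * ‖fderiv ℝ K x‖) ≤ C₀ * lam ^ s →
      ContDiff ℝ (⊤ : ℕ∞) u →
      (∀ (x : E2) (t : ℝ) (i : Fin 2),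
        u (x + (2 * π) • EuclideanSpace.single i 1, t) = u (x, t)) →
      (∀ (x : E2) (t : ℝ),
        ∑ j : Fin 2, fderiv ℝ (fun y => u (y, t) j) x (EuclideanSpace.single j 1) = 0) →
      ContDiff ℝ (⊤ : ℕ∞) f →
      (∀ (x : E2) (t : ℝ) (i : Fin 2),
        f (x + (2 * π) • EuclideanSpace.single i 1, t) = f (x, t)) →
      ∀ (t : ℝ) (x : E2),
        |(deriv (fun τ => ∫ y, K y * f (x - y, τ)) t
            + fderiv ℝ (fun z => ∫ y, K y * f (z - y, t)) x (u (x, t)))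
          - ∫ y, K y * (deriv (fun τ => f (x - y, τ)) t
              + fderiv ℝ (fun z => f (z, t)) (x - y) (u (x - y, t)))|
          ≤ C * C₀ * lam ^ s * (⨆ z : E2, ‖fderiv ℝ (fun w => u (w, t)) z‖)
              * (⨆ z : E2, |f (z, t)|) := by
  refine ⟨1, fun s lam C₀ _ _ K u f hK hKi hxK _ hxDK _ _ _ hM hu hup hdiv hf hfp t x => ?_⟩
  have hut : ContDiff ℝ 1 fun z => u (z, t) :=
    (hu.of_le (by exact_mod_cast le_top)).comp (contDiff_id.prodMk contDiff_const)
  let b := (EuclideanSpace.basisFun (Fin 2) ℝ).toBasis.isUnitSMul fun _ => two_pi_pos.ne'.isUnit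
  have hb (i) : b i = (2 * π) • EuclideanSpace.single i 1 := by
    simp [b, Module.Basis.isUnitSMul_apply]
  refine (material_derivative_convolution_commutator_general volume b hK hKi hxK hxDK hut
    (fun i z => by simpa [hb] using hup z t i)
    (fun z => (divergence_euclideanSpace (hut.differentiable one_ne_zero z)).trans (hdiv z t))
    (hf.of_le (by exact_mod_cast le_top)) (fun τ i z => by simpa [hb] using hfp z τ i) x).trans ?_
  rw [one_mul]
  refine mul_le_mul_of_nonneg_right (mul_le_mul_of_nonneg_right hM ?_) ?_ <;>
    exact Real.iSup_nonneg fun _ => norm_nonneg _
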